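/- Let m, k ∈ ℕ and let g be an arbitrary predicate on truth assignments Fin m → Bool. Then the following are equivalent: (1) every truth assignment β : Fin m → Bool of weight k satisfies g; (2) every truth assignment γ : Fin k × Fin m → Bool of weight k satisfies at least one of the following three conditions: (a) there exist i ∈ Fin k and distinct j, j′ ∈ Fin m with γ(i,j) = true and γ(i,j′) = true; (b) the number of indices j ∈ Fin m such that for every i ∈ Fin k there exists some j′ ≠ j with γ(i,j′) = true, plus k, is at least m + 1; (c) g(β_γ) holds, where β_γ : Fin m → Bool is defined by β_γ(j) = true iff γ(i,j) = true for some i ∈ Fin k. -/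

import Mathlib

/-- The weight of a truth assignment: the number of arguments it maps to true. -/
def weight {X : Type} [Fintype X] (α : X → Bool) : ℕ :=
  (Finset.univ.filter fun x => α x = true).card

/-!
A weight-`k` assignment to `k` blocks of copies in which no block contains two true copies has
exactly one true copy per block, so it is the graph of a function `f` from blocks to variables.
It decodes to the indicator of the range of `f`, and the true negation nodes are exactly the
variables outside that range. Thus condition (b) says that `f` is not injective, and when `f` is
injective the decoded assignment has weight `k`; every weight-`k` assignment arises this way.
-/

section Blocks

variable {ι κ : Type}

/-- Condition (a): the blocks are indexed by `ι`, the universal variables by `κ`, and some block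
contains two true copies. -/
def HasDoubledBlock (γ : ι × κ → Bool) : Prop :=
  ∃ i : ι, ∃ j j' : κ, j ≠ j' ∧ γ (i, j) = true ∧ γ (i, j') = true

/-- The variables `j` whose node `y′_j = ⋀_i ⋁_{j' ≠ j} y^i_{j'}`, simulating `¬y_j`, is true. -/
def negationNodes [Fintype ι] [Fintype κ] [DecidableEq κ] (γ : ι × κ → Bool) : Finset κ :=
  Finset.univ.filter fun j : κ => ∀ i : ι, ∃ j' : κ, j' ≠ j ∧ γ (i, j') = true

/-- The assignment to the original variables computed by the nodes `y_j = ⋁_i y^i_j`. -/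
def decodeBlocks [Fintype ι] (γ : ι × κ → Bool) : κ → Bool :=
  fun j => decide (∃ i : ι, γ (i, j) = true)

/-- The assignment whose true copies form the graph of `f`: block `i` selects the variable `f i`. -/
def oneHot [DecidableEq κ] (f : ι → κ) : ι × κ → Bool :=
  fun p => decide (f p.1 = p.2)

theorem weight_le_one_iff [Fintype κ] {β : κ → Bool} :
    weight β ≤ 1 ↔ ∀ j j', β j = true → β j' = true → j = j' := by
  simp only [weight, Finset.card_le_one_iff, Finset.mem_filter, Finset.mem_univ, true_and]

theorem weight_eq_one_iff [Fintype κ] {β : κ → Bool} :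
    weight β = 1 ↔ ∃! j, β j = true := by
  simp only [weight, Finset.card_eq_one, Finset.eq_singleton_iff_unique_mem, Finset.mem_filter,
    Finset.mem_univ, true_and, ExistsUnique]

theorem weight_prod [Fintype ι] [Fintype κ] (γ : ι × κ → Bool) :
    weight γ = ∑ i, weight fun j => γ (i, j) := by
  simp only [weight, Finset.card_filter, Fintype.sum_prod_type]

theorem not_hasDoubledBlock_iff [Fintype κ] {γ : ι × κ → Bool} :
    ¬HasDoubledBlock γ ↔ ∀ i, weight (fun j => γ (i, j)) ≤ 1 := by
  simp only [HasDoubledBlock, weight_le_one_iff]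
  grind

section OneHot

variable [DecidableEq κ]

theorem oneHot_eq_true_iff {f : ι → κ} {i : ι} {j : κ} : oneHot f (i, j) = true ↔ f i = j :=
  decide_eq_true_iff

theorem weight_oneHot_block [Fintype κ] (f : ι → κ) (i : ι) :
    weight (fun j => oneHot f (i, j)) = 1 :=
  weight_eq_one_iff.2 ⟨f i, oneHot_eq_true_iff.2 rfl, fun _ h => (oneHot_eq_true_iff.1 h).symm⟩

theorem not_hasDoubledBlock_oneHot (f : ι → κ) : ¬HasDoubledBlock (oneHot f) := by
  rintro ⟨i, j, j', hne, hj, hj'⟩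
  exact hne ((oneHot_eq_true_iff.1 hj).symm.trans (oneHot_eq_true_iff.1 hj'))

variable [Fintype ι]

theorem decodeBlocks_oneHot_eq_true_iff {f : ι → κ} {j : κ} :
    decodeBlocks (oneHot f) j = true ↔ j ∈ Finset.univ.image f := by
  simp [decodeBlocks, oneHot]

variable [Fintype κ]

theorem weight_oneHot (f : ι → κ) : weight (oneHot f) = Fintype.card ι := by
  simp [weight_prod, weight_oneHot_block]

theorem exists_eq_oneHot {γ : ι × κ → Bool} (hweight : weight γ = Fintype.card ι)
    (hblocks : ¬HasDoubledBlock γ) : ∃ f : ι → κ, γ = oneHot f := by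
  have hle : ∀ i ∈ Finset.univ, weight (fun j => γ (i, j)) ≤ 1 :=
    fun i _ => not_hasDoubledBlock_iff.1 hblocks i
  have hsum : ∑ i, weight (fun j => γ (i, j)) = ∑ _i : ι, 1 := by
    rw [← weight_prod, hweight, Fintype.card_eq_sum_ones]
  have hone : ∀ i, ∃! j, γ (i, j) = true := fun i =>
    weight_eq_one_iff.1 ((Finset.sum_eq_sum_iff_of_le hle).1 hsum i (Finset.mem_univ i))
  choose f hf hunique using hone
  refine ⟨f, funext fun ⟨i, j⟩ => Bool.eq_iff_iff.2 ?_⟩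
  rw [oneHot_eq_true_iff]
  exact ⟨fun hj => (hunique i j hj).symm, fun hij => hij ▸ hf i⟩

theorem weight_decodeBlocks_oneHot (f : ι → κ) :
    weight (decodeBlocks (oneHot f)) = (Finset.univ.image f).card := by
  simp only [weight, decodeBlocks_oneHot_eq_true_iff, Finset.filter_univ_mem]

theorem negationNodes_oneHot (f : ι → κ) :
    negationNodes (oneHot f) = (Finset.univ.image f)ᶜ := by
  ext j
  simp [negationNodes, oneHot_eq_true_iff]

theorem weight_decodeBlocks_oneHot_eq_card_iff {f : ι → κ} :
    weight (decodeBlocks (oneHot f)) = Fintype.card ι ↔ Function.Injective f := by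
  rw [weight_decodeBlocks_oneHot, ← Finset.card_univ, Finset.card_image_iff, Finset.coe_univ,
    Set.injOn_univ]

theorem card_add_one_le_card_negationNodes_oneHot_add_card_iff {f : ι → κ} :
    Fintype.card κ + 1 ≤ (negationNodes (oneHot f)).card + Fintype.card ι ↔
      ¬Function.Injective f := by
  have hcompl := Finset.card_compl_add_card (Finset.univ.image f)
  have hle : (Finset.univ.image f).card ≤ Fintype.card ι := Finset.card_image_le
  rw [← weight_decodeBlocks_oneHot_eq_card_iff, weight_decodeBlocks_oneHot, negationNodes_oneHot]
  omega

theorem exists_injective_decodeBlocks_oneHot_eq {β : κ → Bool} (hβ : weight β = Fintype.card ι) :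
    ∃ f : ι → κ, Function.Injective f ∧ decodeBlocks (oneHot f) = β := by
  have hcard : Fintype.card ι = Fintype.card {j // β j = true} := by
    rw [← hβ, weight, Fintype.card_subtype]
  let e : ι ≃ {j // β j = true} := Fintype.equivOfCardEq hcard
  refine ⟨fun i => e i, Subtype.val_injective.comp e.injective, funext fun j => ?_⟩
  rw [Bool.eq_iff_iff, decodeBlocks_oneHot_eq_true_iff, Finset.mem_image]
  exact ⟨fun ⟨i, _, hi⟩ => hi ▸ (e i).2,
    fun hj => ⟨e.symm ⟨j, hj⟩, Finset.mem_univ _, by rw [e.apply_symm_apply]⟩⟩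

theorem statement4_general (g : (κ → Bool) → Prop) :
    (∀ β : κ → Bool, weight β = Fintype.card ι → g β) ↔
    (∀ γ : ι × κ → Bool, weight γ = Fintype.card ι →
      (HasDoubledBlock γ ∨
       Fintype.card κ + 1 ≤ (negationNodes γ).card + Fintype.card ι ∨
       g (decodeBlocks γ))) := by
  constructor
  · intro hg γ hγ
    refine or_iff_not_imp_left.2 fun hblocks => ?_
    obtain ⟨f, rfl⟩ := exists_eq_oneHot hγ hblocks
    rw [card_add_one_le_card_negationNodes_oneHot_add_card_iff, ← imp_iff_not_or]
    exact fun hf => hg _ (weight_decodeBlocks_oneHot_eq_card_iff.2 hf)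
  · intro h β hβ
    obtain ⟨f, hf, rfl⟩ := exists_injective_decodeBlocks_oneHot_eq hβ
    have hcases := (h (oneHot f) (weight_oneHot f)).resolve_left (not_hasDoubledBlock_oneHot f)
    rw [card_add_one_le_card_negationNodes_oneHot_add_card_iff, ← imp_iff_not_or] at hcases
    exact hcases hf

end OneHot

end Blocks

/-- Correctness of the monotone-in-the-universal-variables construction: an arbitrary
predicate `g` holds for all weight-`k` assignments `β : Fin m → Bool` iff every weight-`k`
assignment `γ` to the `k × m` copy variables satisfies (a) some block contains two true
copies, or (b) at least `m - k + 1` of the "negation" nodes are true (expressed as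
`m + 1 ≤ card + k`), or (c) `g` holds of the assignment decoded from `γ`. -/
theorem statement4 (m k : ℕ) (g : (Fin m → Bool) → Prop) :
    (∀ β : Fin m → Bool, weight β = k → g β) ↔
    (∀ γ : Fin k × Fin m → Bool, weight γ = k →
      ((∃ i : Fin k, ∃ j j' : Fin m, j ≠ j' ∧ γ (i, j) = true ∧ γ (i, j') = true) ∨
       (m + 1 ≤
          (Finset.univ.filter (fun j : Fin m =>
            ∀ i : Fin k, ∃ j' : Fin m, j' ≠ j ∧ γ (i, j') = true)).card + k) ∨
       g (fun j : Fin m => decide (∃ i : Fin k, γ (i, j) = true)))) := by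
  -- On `Fin` the quantifiers carry other `Decidable` instances than on a general `Fintype`.
  convert statement4_general (ι := Fin k) g <;>
    simp [HasDoubledBlock, negationNodes, decodeBlocks]
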